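/- Let N be a Lévy density with ∫_ℝ |x| N(x) dx < ∞ and g(x) = xN(x). For Δ > 0 let P_Δ be the distribution with characteristic function ψ_Δ(u) = exp(Δ ∫_ℝ (e^{iux} − 1) N(x) dx) and Z₁^Δ a random variable with law P_Δ. Then the signed measure μ_Δ(dx) = Δ⁻¹ x P_Δ(dx) is absolutely continuous with density h_Δ given by h_Δ(x) = ∫ g(x − y) P_Δ(dy) = E[g(x − Z₁^Δ)]. -/

import Mathlib

open MeasureTheory Real Filter Finset Asymptotics
open scoped Topology

noncomputable section

namespace LevyAdapt

/-- Fourier transform `g*(u) = ∫ e^{iux} g(x) dx`. -/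
def ft (g : ℝ → ℝ) (u : ℝ) : ℂ :=
  ∫ x : ℝ, Complex.exp (Complex.I * u * x) * (g x : ℂ)

/-- Scaled kernel `K_h(x) = h⁻¹ K(x/h)`. -/
def sk (K : ℝ → ℝ) (h x : ℝ) : ℝ := h⁻¹ * K (x / h)

/-- L¹ norm. -/
def nl1 (f : ℝ → ℝ) : ℝ := ∫ x : ℝ, |f x|

/-- Squared L² norm. -/
def nl2sq (f : ℝ → ℝ) : ℝ := ∫ x : ℝ, (f x) ^ 2

/-- Sup norm. -/
def nsup (f : ℝ → ℝ) : ℝ := ⨆ x : ℝ, |f x|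

/-- L¹ norm of a complex-valued function on ℝ. -/
def cnl1 (f : ℝ → ℂ) : ℝ := ∫ u : ℝ, ‖f u‖

/-- Squared L² norm of a complex-valued function on ℝ. -/
def cnl2sq (f : ℝ → ℂ) : ℝ := ∫ u : ℝ, ‖f u‖ ^ 2

/-- The largest integer strictly smaller than `β` (for `β > 0`). -/
def hfloor (β : ℝ) : ℕ := ⌈β⌉₊ - 1

/-- The Hölder class `H(β, L)`: with `l = hfloor β`, the `l`-th derivative exists and is
`(β - l)`-Hölder with constant `L`. -/
def Holder (β L : ℝ) (f : ℝ → ℝ) : Prop :=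
  (∀ m : ℕ, m < hfloor β → Differentiable ℝ (iteratedDeriv m f)) ∧
  ∀ x y : ℝ,
    |iteratedDeriv (hfloor β) f x - iteratedDeriv (hfloor β) f y| ≤
      L * |x - y| ^ (β - (hfloor β : ℝ))

/-- Assumption G1: `g ∈ L²`. -/
def G1 (g : ℝ → ℝ) : Prop := Integrable (fun x : ℝ => (g x) ^ 2)

/-- Assumption G2: `g*` is differentiable a.e. and its derivative is integrable. -/
def G2 (g : ℝ → ℝ) : Prop :=
  (∀ᵐ u : ℝ, DifferentiableAt ℝ (ft g) u) ∧ Integrable (deriv (ft g))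

/-- Assumption G3(p): `∫ |x|^(p-1) |g(x)| dx < ∞`. -/
def G3 (p : ℕ) (g : ℝ → ℝ) : Prop :=
  Integrable (fun x : ℝ => |x| ^ (p - 1) * |g x|)

/-- Assumption G5: `g'` exists and is uniformly bounded. -/
def G5 (g : ℝ → ℝ) : Prop :=
  Differentiable ℝ g ∧ BddAbove (Set.range fun x : ℝ => |deriv g x|)

/-- Assumption K1: `K ∈ L¹ ∩ L² ∩ L^∞` and `K* ∈ L¹`. -/
def K1 (K : ℝ → ℝ) : Prop :=
  Measurable K ∧ Integrable K ∧ Integrable (fun x : ℝ => (K x) ^ 2) ∧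
    BddAbove (Set.range fun x : ℝ => |K x|) ∧ Integrable (ft K)

/-- `K` is a kernel of order `m`. -/
def KernelOrder (m : ℕ) (K : ℝ → ℝ) : Prop :=
  (∀ j : ℕ, j ≤ m → Integrable (fun t : ℝ => t ^ j * K t)) ∧
  (∫ t : ℝ, K t) = 1 ∧
  ∀ j : ℕ, 1 ≤ j → j ≤ m → (∫ t : ℝ, t ^ j * K t) = 0

/-- Assumption K2(α): `K` is a kernel of order `hfloor α` and `∫ |x|^α |K(x)| dx < ∞`. -/
def K2 (α : ℝ) (K : ℝ → ℝ) : Prop :=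
  KernelOrder (hfloor α) K ∧ Integrable (fun x : ℝ => |x| ^ α * |K x|)

/-- `P` is the law of an increment of length `Δ` of the pure-jump Lévy process with Lévy
density `N`, characterized through its characteristic function. -/
def IncrementLawN (P : Measure ℝ) (Δ : ℝ) (N : ℝ → ℝ) : Prop :=
  ∀ u : ℝ,
    (∫ x : ℝ, Complex.exp (Complex.I * u * x) ∂P) =
      Complex.exp ((Δ : ℂ) * ∫ x : ℝ, (Complex.exp (Complex.I * u * x) - 1) * (N x : ℂ))

/-- Increment law expressed through `g(x) = x N(x)`, i.e. `N(x) = g(x)/x`. -/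
def IncrementLaw (P : Measure ℝ) (Δ : ℝ) (g : ℝ → ℝ) : Prop :=
  IncrementLawN P Δ fun x => g x / x

/-- The `n`-sample (i.i.d.) product measure. -/
def pm (P : Measure ℝ) [SigmaFinite P] (n : ℕ) : Measure (Fin n → ℝ) :=
  Measure.pi fun _ => P

/-- The kernel estimator `ĝ_h(x) = (nΔ)⁻¹ ∑ₖ Zₖ K_h(x - Zₖ)`. -/
def ghat (K : ℝ → ℝ) (h Δ : ℝ) {n : ℕ} (z : Fin n → ℝ) (x : ℝ) : ℝ :=
  ((n : ℝ) * Δ)⁻¹ * ∑ k : Fin n, z k * sk K h (x - z k)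

/-- The auxiliary estimator `ĝ_{h,h'}(x)` using the convolved kernel `K_{h'} ⋆ K_h`. -/
def ghat2 (K : ℝ → ℝ) (h h' Δ : ℝ) {n : ℕ} (z : Fin n → ℝ) (x : ℝ) : ℝ :=
  ((n : ℝ) * Δ)⁻¹ *
    ∑ k : Fin n, z k * ∫ y : ℝ, sk K h' y * sk K h (x - z k - y)

/-- Mean `E[ĝ_h(x)]` of the kernel estimator. -/
def mghat (K : ℝ → ℝ) (h Δ : ℝ) (n : ℕ) (P : Measure ℝ) [SigmaFinite P] (x : ℝ) : ℝ :=
  ∫ z : Fin n → ℝ, ghat K h Δ z x ∂(pm P n)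

/-- Mean `E[ĝ_{h,h'}(x)]` of the auxiliary estimator. -/
def mghat2 (K : ℝ → ℝ) (h h' Δ : ℝ) (n : ℕ) (P : Measure ℝ) [SigmaFinite P] (x : ℝ) : ℝ :=
  ∫ z : Fin n → ℝ, ghat2 K h h' Δ z x ∂(pm P n)

/-- The pointwise mean squared error `E[(ĝ_h(x) - g(x))²]`. -/
def mse (K : ℝ → ℝ) (h Δ : ℝ) (n : ℕ) (P : Measure ℝ) [SigmaFinite P]
    (g : ℝ → ℝ) (x : ℝ) : ℝ :=
  ∫ z : Fin n → ℝ, (ghat K h Δ z x - g x) ^ 2 ∂(pm P n)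

/-- The variance `Var[ĝ_h(x)]`. -/
def varghat (K : ℝ → ℝ) (h Δ : ℝ) (n : ℕ) (P : Measure ℝ) [SigmaFinite P] (x : ℝ) : ℝ :=
  ∫ z : Fin n → ℝ, (ghat K h Δ z x - mghat K h Δ n P x) ^ 2 ∂(pm P n)

/-- The constant `c₁ = 2 (L/⌊β⌋! ∫|K(v)||v|^β dv)²`. -/
def c1 (K : ℝ → ℝ) (β L : ℝ) : ℝ :=
  2 * (L / (Nat.factorial (hfloor β) : ℝ) * ∫ v : ℝ, |K v| * |v| ^ β) ^ 2

/-- The constant `c₁' = 2 (2‖g'‖_∞ ‖g‖₁ ‖K‖₁)²`. -/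
def c1' (K g : ℝ → ℝ) : ℝ := 2 * (2 * nsup (deriv g) * nl1 g * nl1 K) ^ 2

/-- The constant `c₂ = ‖(g*)'‖₁ ‖K‖₂² / (2π)`. -/
def c2 (K g : ℝ → ℝ) : ℝ := cnl1 (deriv (ft g)) * nl2sq K / (2 * π)

/-- The constant `c₂' = ‖K‖₂² ‖g‖₂²`. -/
def c2' (K g : ℝ → ℝ) : ℝ := nl2sq K * nl2sq g

/-- The constant `C₀ = (c/(2π)) ‖K‖₂² (‖(g*)'‖₁ + ‖g*‖₂²)`. -/
def C0 (c : ℝ) (K g : ℝ → ℝ) : ℝ :=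
  c / (2 * π) * nl2sq K * (cnl1 (deriv (ft g)) + cnl2sq (ft g))

/-- The penalty `V(h) = C₀ log(nΔ) / (nhΔ)`. -/
def Vfun (c : ℝ) (K g : ℝ → ℝ) (n : ℕ) (Δ h : ℝ) : ℝ :=
  C0 c K g * Real.log ((n : ℝ) * Δ) / ((n : ℝ) * h * Δ)

/-- The bandwidth collection `H = {j/M : 1 ≤ j ≤ M}`. -/
def bset (M : ℕ) : Finset ℝ := (Finset.Icc 1 M).image fun j : ℕ => (j : ℝ) / (M : ℝ)

/-- The quantity `A(h, x₀) = sup_{h' ∈ H} [ |ĝ_{h,h'}(x₀) - ĝ_{h'}(x₀)|² - V(h') ]₊`. -/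
def Afun (K : ℝ → ℝ) (Δ : ℝ) (H : Finset ℝ) (V : ℝ → ℝ) {n : ℕ}
    (z : Fin n → ℝ) (x h : ℝ) : ℝ :=
  ⨆ h' ∈ H, max ((ghat2 K h h' Δ z x - ghat K h' Δ z x) ^ 2 - V h') 0

/-- Average `Δ̄` of the sampling intervals. -/
def dbar {n : ℕ} (Δs : Fin n → ℝ) : ℝ := (n : ℝ)⁻¹ * ∑ k, Δs k

/-- Average `Δ²‾` of the squared sampling intervals. -/
def d2bar {n : ℕ} (Δs : Fin n → ℝ) : ℝ := (n : ℝ)⁻¹ * ∑ k, (Δs k) ^ 2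

/-- The truncation level `μ_n(h)`. -/
def mulev (c : ℝ) (K g : ℝ → ℝ) (n : ℕ) (Δ h : ℝ) : ℝ :=
  nl2sq K * (cnl1 (deriv (ft g)) + cnl2sq (ft g)) /
    (2 * π * nsup K * Real.sqrt (Vfun c K g n Δ h / 6))

/-- The truncated summand `W(h)` as a function of a single observation. -/
def Wtr (c : ℝ) (K g : ℝ → ℝ) (n : ℕ) (Δ h x₀ x : ℝ) : ℝ :=
  if |x| ≤ mulev c K g n Δ h then x / Δ * sk K h (x₀ - x) else 0

/-- The remainder summand `T(h)` as a function of a single observation. -/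
def Ttr (c : ℝ) (K g : ℝ → ℝ) (n : ℕ) (Δ h x₀ x : ℝ) : ℝ :=
  if mulev c K g n Δ h < |x| then x / Δ * sk K h (x₀ - x) else 0

/-- The empirical estimator of `‖(g*)'‖₁`. -/
def estDeriv (Δ : ℝ) {n : ℕ} (z : Fin n → ℝ) (hband : ℝ) : ℝ :=
  ∫ u : ℝ, ‖(((n : ℝ) * Δ)⁻¹ : ℂ) *
      ∑ k : Fin n, (z k : ℂ) ^ 2 *
        (Set.indicator (Set.Icc (-1 : ℝ) 1) (fun _ => (1 : ℂ)) (u * hband)) *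
        Complex.exp (Complex.I * u * z k)‖

/-- The empirical estimator of `‖g*‖₂²`. -/
def estL2 (Δ : ℝ) {n : ℕ} (z : Fin n → ℝ) (hband : ℝ) : ℝ :=
  ∫ u : ℝ, ‖(((n : ℝ) * Δ)⁻¹ : ℂ) *
      ∑ k : Fin n, (z k : ℂ) *
        (Set.indicator (Set.Icc (-1 : ℝ) 1) (fun _ => (1 : ℂ)) (u * hband)) *
        Complex.exp (Complex.I * u * z k)‖ ^ 2

/-- The data-driven penalty `V(h)` built with the estimated constant `C₀`. -/
def VfunHat (c : ℝ) (K : ℝ → ℝ) (n : ℕ) (Δ : ℝ) {m : ℕ} (z : Fin m → ℝ) (h : ℝ) : ℝ :=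
  c / (2 * π) * nl2sq K *
      (estDeriv Δ z (((n : ℝ) * Δ) ^ (-(1/3 : ℝ))) + estL2 Δ z (((n : ℝ) * Δ) ^ (-(1/3 : ℝ)))) *
    Real.log ((n : ℝ) * Δ) / ((n : ℝ) * h * Δ)

lemma norm_exp_I_mul_mul (u x : ℝ) : ‖Complex.exp (Complex.I * u * x)‖ = 1 := by
  have := Complex.norm_exp_I_mul_ofReal (u * x)
  rwa [Complex.ofReal_mul, ← mul_assoc] at this

lemma norm_exp_I_mul_mul_sub_one_le (u x : ℝ) :
    ‖Complex.exp (Complex.I * u * x) - 1‖ ≤ |u| * |x| := by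
  have := Real.norm_exp_I_mul_ofReal_sub_one_le (x := u * x)
  rwa [Complex.ofReal_mul, ← mul_assoc, Real.norm_eq_abs, abs_mul] at this

lemma continuous_exp_I_mul_mul (u : ℝ) :
    Continuous fun x : ℝ => Complex.exp (Complex.I * u * x) := by fun_prop

lemma integrable_exp_mul {μ : Measure ℝ} {f : ℝ → ℝ} (hf : Integrable f μ) (u : ℝ) :
    Integrable (fun x : ℝ => Complex.exp (Complex.I * u * x) * (f x : ℂ)) μ :=
  hf.ofReal.bdd_mul (c := 1) (continuous_exp_I_mul_mul u).aestronglyMeasurable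
    (Eventually.of_forall fun x => (norm_exp_I_mul_mul u x).le)

/-- Decomposition of a Fourier integral along positive and negative parts. -/
lemma integral_exp_mul_eq_sub {μ : Measure ℝ} {f : ℝ → ℝ} (hf : Integrable f μ) (u : ℝ) :
    ∫ x : ℝ, Complex.exp (Complex.I * u * x) * (f x : ℂ) ∂μ =
      ∫ x : ℝ, Complex.exp (Complex.I * u * x) ∂(μ.withDensity fun x => ENNReal.ofReal (f x)) -
      ∫ x : ℝ, Complex.exp (Complex.I * u * x)
        ∂(μ.withDensity fun x => ENNReal.ofReal (-f x)) := by
  have hm := hf.aestronglyMeasurable.aemeasurable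
  have hm' : AEMeasurable (fun x => -f x) μ := hm.neg
  rw [integral_withDensity_eq_integral_toReal_smul₀ hm.ennreal_ofReal (by simp),
    integral_withDensity_eq_integral_toReal_smul₀ hm'.ennreal_ofReal (by simp),
    ← integral_sub]
  · refine integral_congr_ae (Eventually.of_forall fun x => ?_)
    simp only [ENNReal.toReal_ofReal']
    rw [← sub_smul, max_zero_sub_max_neg_zero_eq_self, Complex.real_smul, mul_comm]
  · have := integrable_exp_mul hf.pos_part u
    refine this.congr (Eventually.of_forall fun x => ?_)
    simp only [ENNReal.toReal_ofReal', Complex.real_smul, mul_comm]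
  · have := integrable_exp_mul hf.neg_part u
    refine this.congr (Eventually.of_forall fun x => ?_)
    simp only [ENNReal.toReal_ofReal', Complex.real_smul, mul_comm]

/-- Two real densities with respect to possibly different measures whose Fourier transforms agree
define the same signed measure. -/
lemma setIntegral_eq_of_fourier_eq {μ ν : Measure ℝ} {f h : ℝ → ℝ}
    (hf : Integrable f μ) (hh : Integrable h ν)
    (H : ∀ u : ℝ, ∫ x : ℝ, Complex.exp (Complex.I * u * x) * (f x : ℂ) ∂μ =
      ∫ x : ℝ, Complex.exp (Complex.I * u * x) * (h x : ℂ) ∂ν)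
    {A : Set ℝ} (hA : MeasurableSet A) :
    ∫ x in A, f x ∂μ = ∫ x in A, h x ∂ν := by
  have i1 := isFiniteMeasure_withDensity_ofReal hf.2
  have i2 := isFiniteMeasure_withDensity_ofReal hh.2
  have i3 := isFiniteMeasure_withDensity_ofReal hf.neg.2
  have i4 := isFiniteMeasure_withDensity_ofReal hh.neg.2
  simp only [Pi.neg_apply] at i3 i4
  have hb : ∀ (u : ℝ) (ρ : Measure ℝ) [IsFiniteMeasure ρ],
      Integrable (fun x : ℝ => Complex.exp (Complex.I * u * x)) ρ := fun u ρ _ =>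
    (integrable_const (1 : ℝ)).mono' (continuous_exp_I_mul_mul u).aestronglyMeasurable
      (Eventually.of_forall fun x => (norm_exp_I_mul_mul u x).le)
  have key : (μ.withDensity fun x => ENNReal.ofReal (f x)) +
        (ν.withDensity fun x => ENNReal.ofReal (-h x)) =
      (ν.withDensity fun x => ENNReal.ofReal (h x)) +
        (μ.withDensity fun x => ENNReal.ofReal (-f x)) := by
    refine Measure.ext_of_charFun (funext fun u => ?_)
    have e : ∀ x : ℝ, Complex.exp (u * x * Complex.I) = Complex.exp (Complex.I * u * x) :=
      fun x => by ring_nf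
    simp only [charFun_apply_real, e]
    rw [integral_add_measure (hb _ _) (hb _ _), integral_add_measure (hb _ _) (hb _ _)]
    have := H u
    rw [integral_exp_mul_eq_sub hf, integral_exp_mul_eq_sub hh] at this
    linear_combination this
  have k2 := congrArg (fun ρ : Measure ℝ => ρ.real A) key
  rw [measureReal_add_apply, measureReal_add_apply] at k2
  simp only [measureReal_def, withDensity_apply _ hA] at k2
  rw [integral_eq_lintegral_pos_part_sub_lintegral_neg_part hf.integrableOn,
    integral_eq_lintegral_pos_part_sub_lintegral_neg_part hh.integrableOn]
  linarith

/-- Differentiation of `u ↦ ∫ (e^{iux} - 1) n(x) μ(dx)` under the integral sign. -/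
lemma hasDerivAt_integral_exp_sub_one_mul {μ : Measure ℝ} {n : ℝ → ℝ}
    (hn : AEStronglyMeasurable n μ) (hxn : Integrable (fun x => x * n x) μ) (u : ℝ) :
    HasDerivAt (fun u : ℝ => ∫ x : ℝ, (Complex.exp (Complex.I * u * x) - 1) * (n x : ℂ) ∂μ)
      (Complex.I * ∫ x : ℝ, Complex.exp (Complex.I * u * x) * ((x * n x : ℝ) : ℂ) ∂μ) u := by
  have hn' : AEStronglyMeasurable (fun x => (n x : ℂ)) μ :=
    Complex.continuous_ofReal.comp_aestronglyMeasurable hn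
  have hF : ∀ u : ℝ, AEStronglyMeasurable
      (fun x : ℝ => (Complex.exp (Complex.I * u * x) - 1) * (n x : ℂ)) μ := fun u =>
    ((continuous_exp_I_mul_mul u).sub continuous_const).aestronglyMeasurable.mul hn'
  rw [← integral_const_mul]
  refine (hasDerivAt_integral_of_dominated_loc_of_deriv_le (𝕜 := ℝ) (s := Set.univ)
    (bound := fun x => ‖x * n x‖) univ_mem (Eventually.of_forall hF) ?_
    (F' := fun (u x : ℝ) => Complex.I * (Complex.exp (Complex.I * u * x) * ((x * n x : ℝ) : ℂ)))
    ?_ ?_ hxn.norm ?_).2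
  · refine (hxn.norm.const_mul |u|).mono' (hF u) (Eventually.of_forall fun x => ?_)
    rw [norm_mul, Complex.norm_real, norm_mul, ← mul_assoc]
    exact mul_le_mul_of_nonneg_right (norm_exp_I_mul_mul_sub_one_le u x) (norm_nonneg _)
  · exact ((integrable_exp_mul hxn u).const_mul _).aestronglyMeasurable
  · refine Eventually.of_forall fun x v _ => ?_
    rw [norm_mul, norm_mul, norm_exp_I_mul_mul, Complex.norm_I, Complex.norm_real]
    simp
  · refine Eventually.of_forall fun x v _ => ?_
    have h1 : HasDerivAt (fun v : ℝ => Complex.I * v * x) (Complex.I * 1 * x) v :=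
      ((Complex.ofRealCLM.hasDerivAt (x := v)).const_mul Complex.I).mul_const _
    have h2 := (h1.cexp.sub_const 1).mul_const (n x : ℂ)
    have e : Complex.I * (Complex.exp (Complex.I * v * x) * ((x * n x : ℝ) : ℂ)) =
        Complex.exp (Complex.I * v * x) * (Complex.I * 1 * x) * n x := by
      push_cast
      ring
    rw [e]
    exact h2

/-- The constant `∫ (1 - cos t) / t² dt`. -/
def oneSubCosConst : ENNReal := ∫⁻ t : ℝ, ENNReal.ofReal ((1 - Real.cos t) / t ^ 2)

lemma one_sub_cos_div_sq_le {b C u : ℝ} (h : |b| ≤ C * |u|) :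
    (1 - Real.cos b) / u ^ 2 ≤ (C ^ 2 / 2 + 2) * (1 + u ^ 2)⁻¹ := by
  rcases eq_or_ne u 0 with rfl | hu
  · simp; positivity
  have hu2 : 0 < u ^ 2 := by positivity
  rw [← div_eq_mul_inv, div_le_div_iff₀ hu2 (by positivity)]
  have h1 := Real.one_sub_sq_div_two_le_cos (x := b)
  have h2 := Real.neg_one_le_cos b
  have h3 : b ^ 2 ≤ C ^ 2 * u ^ 2 := by
    have := pow_le_pow_left₀ (abs_nonneg b) h 2
    rwa [mul_pow, sq_abs, sq_abs] at this
  nlinarith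

lemma lintegral_const_mul_inv_one_add_sq_lt_top (C : ℝ) :
    ∫⁻ u : ℝ, ENNReal.ofReal (C * (1 + u ^ 2)⁻¹) < ⊤ :=
  (integrable_inv_one_add_sq.const_mul C).lintegral_lt_top

lemma oneSubCosConst_ne_top : oneSubCosConst ≠ ⊤ :=
  ((lintegral_mono fun t => ENNReal.ofReal_le_ofReal
    (one_sub_cos_div_sq_le (b := t) (C := 1) (u := t) (by simp))).trans_lt
    (lintegral_const_mul_inv_one_add_sq_lt_top _)).ne

lemma oneSubCosConst_ne_zero : oneSubCosConst ≠ 0 := by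
  refine ((lintegral_pos_iff_support (by fun_prop)).2 ?_).ne'
  refine lt_of_lt_of_le ?_ (measure_mono (s := Set.Ioo 0 1) fun t ht => ?_)
  · simp
  · have h1 : Real.cos t < 1 := by
      rw [← Real.cos_zero]
      exact Real.cos_lt_cos_of_nonneg_of_le_pi le_rfl (by linarith [Real.pi_gt_three, ht.2]) ht.1
    have : 0 < (1 - Real.cos t) / t ^ 2 := div_pos (by linarith) (pow_pos ht.1 2)
    simpa using this

lemma lintegral_one_sub_cos_mul (x : ℝ) :
    ∫⁻ u : ℝ, ENNReal.ofReal ((1 - Real.cos (u * x)) / u ^ 2) =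
      ENNReal.ofReal |x| * oneSubCosConst := by
  rcases eq_or_ne x 0 with rfl | hx
  · simp
  have hm : Measurable fun t : ℝ => ENNReal.ofReal ((1 - Real.cos t) / t ^ 2) := by fun_prop
  have h1 := lintegral_map (μ := volume) hm (measurable_const_mul x)
  rw [Real.map_volume_mul_left hx, lintegral_smul_measure] at h1
  have h2 : ∀ u : ℝ, ENNReal.ofReal ((1 - Real.cos (u * x)) / u ^ 2) =
      ENNReal.ofReal (x ^ 2) * ENNReal.ofReal ((1 - Real.cos (x * u)) / (x * u) ^ 2) := by
    intro u
    rw [← ENNReal.ofReal_mul (sq_nonneg x), mul_comm u x]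
    congr 1
    rcases eq_or_ne u 0 with rfl | hu
    · simp
    · field_simp
  simp only [h2]
  rw [lintegral_const_mul _ (by fun_prop), ← h1, smul_eq_mul, ← mul_assoc,
    ← ENNReal.ofReal_mul (sq_nonneg x), ← sq_abs x, abs_inv, oneSubCosConst]
  congr 2
  have := abs_pos.2 hx
  field_simp

/-- First absolute moments in terms of `∫ (1 - cos (ux)) μ(dx)`. -/
lemma lintegral_lintegral_one_sub_cos (μ : Measure ℝ) [SFinite μ] :
    ∫⁻ u : ℝ, ∫⁻ x : ℝ, ENNReal.ofReal ((1 - Real.cos (u * x)) / u ^ 2) ∂μ =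
      (∫⁻ x : ℝ, ENNReal.ofReal |x| ∂μ) * oneSubCosConst := by
  rw [lintegral_lintegral_swap (by unfold Function.uncurry; fun_prop)]
  simp only [lintegral_one_sub_cos_mul]
  rw [lintegral_mul_const _ (by fun_prop)]

lemma one_sub_re_exp_le {z : ℂ} (hz : z.re ≤ 0) :
    1 - (Complex.exp z).re ≤ -z.re + (1 - Real.cos z.im) := by
  rw [Complex.exp_re]
  have h1 := Real.add_one_le_exp z.re
  have h2 := Real.exp_le_one_iff.2 hz
  have h3 := Real.cos_le_one z.im
  nlinarith [Real.exp_pos z.re]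

lemma re_exp_I_mul_mul (u x : ℝ) : (Complex.exp (Complex.I * u * x)).re = Real.cos (u * x) := by
  have : Complex.I * u * x = ((u * x : ℝ) : ℂ) * Complex.I := by push_cast; ring
  rw [this, Complex.exp_ofReal_mul_I_re]

/-- The increments have a finite first moment as soon as `∫ |x| N(x) dx < ∞`. -/
lemma IncrementLawN.integrable_id {N : ℝ → ℝ} (hN0 : ∀ x, 0 ≤ N x)
    (hNm : AEStronglyMeasurable N) (hxN : Integrable fun x : ℝ => |x| * N x)
    {Δ : ℝ} (hΔ : 0 < Δ) {P : Measure ℝ} [IsProbabilityMeasure P] (hP : IncrementLawN P Δ N) :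
    Integrable (fun x : ℝ => x) P := by
  set F : ℝ → ℂ := fun u => ∫ x : ℝ, (Complex.exp (Complex.I * u * x) - 1) * (N x : ℂ) with hF
  have hFb : ∀ u x : ℝ, ‖(Complex.exp (Complex.I * u * x) - 1) * (N x : ℂ)‖ ≤
      |u| * (|x| * N x) := fun u x => by
    rw [norm_mul, Complex.norm_real, Real.norm_of_nonneg (hN0 x), ← mul_assoc]
    exact mul_le_mul_of_nonneg_right (norm_exp_I_mul_mul_sub_one_le u x) (hN0 x)
  have hFi : ∀ u : ℝ, Integrable fun x : ℝ =>
      (Complex.exp (Complex.I * u * x) - 1) * (N x : ℂ) := fun u =>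
    (hxN.const_mul |u|).mono'
      (((continuous_exp_I_mul_mul u).sub continuous_const).aestronglyMeasurable.mul
        (Complex.continuous_ofReal.comp_aestronglyMeasurable hNm))
      (Eventually.of_forall (hFb u))
  have hFre : ∀ u x : ℝ, -((Complex.exp (Complex.I * u * x) - 1) * (N x : ℂ)).re =
      (1 - Real.cos (u * x)) * N x := fun u x => by
    rw [Complex.re_mul_ofReal, Complex.sub_re, re_exp_I_mul_mul, Complex.one_re]
    ring
  have hci : ∀ u : ℝ, Integrable fun x : ℝ => (1 - Real.cos (u * x)) * N x := fun u =>
    (hFi u).re.neg.congr (Eventually.of_forall (hFre u))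
  have hre : ∀ u, -(F u).re = ∫ x : ℝ, (1 - Real.cos (u * x)) * N x := fun u => by
    have := integral_re (hFi u)
    simp only [RCLike.re_eq_complex_re] at this
    rw [hF, ← this, ← integral_neg]
    exact integral_congr_ae (Eventually.of_forall (hFre u))
  have hre0 : ∀ u, (F u).re ≤ 0 := fun u => by
    have : 0 ≤ -(F u).re := by
      rw [hre]
      exact integral_nonneg fun x => mul_nonneg (by linarith [Real.cos_le_one (u * x)]) (hN0 x)
    linarith
  set m : ℝ := ∫ x : ℝ, |x| * N x with hm
  have him : ∀ u, |(Δ * F u).im| ≤ (Δ * m) * |u| := fun u => by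
    refine (Complex.abs_im_le_norm _).trans ?_
    rw [norm_mul, Complex.norm_real, Real.norm_of_nonneg hΔ.le, mul_assoc]
    refine mul_le_mul_of_nonneg_left ?_ hΔ.le
    rw [hm, mul_comm, ← integral_const_mul]
    exact norm_integral_le_of_norm_le (hxN.const_mul |u|) (Eventually.of_forall (hFb u))
  have hcos : ∀ u : ℝ, Integrable (fun x : ℝ => 1 - Real.cos (u * x)) P := fun u =>
    (integrable_const (2 : ℝ)).mono' (by fun_prop) (Eventually.of_forall fun x => by
      rw [Real.norm_of_nonneg (by linarith [Real.cos_le_one (u * x)])]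
      linarith [Real.neg_one_le_cos (u * x)])
  have hexp : ∀ u : ℝ, Integrable (fun x : ℝ => Complex.exp (Complex.I * u * x)) P := fun u =>
    (integrable_const (1 : ℝ)).mono' (continuous_exp_I_mul_mul u).aestronglyMeasurable
      (Eventually.of_forall fun x => (norm_exp_I_mul_mul u x).le)
  have hPre : ∀ u : ℝ, ∫ x : ℝ, (1 - Real.cos (u * x)) ∂P = 1 - (Complex.exp (Δ * F u)).re := by
    intro u
    have h1 := integral_re (hexp u)
    simp only [RCLike.re_eq_complex_re, re_exp_I_mul_mul] at h1
    rw [hP u] at h1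
    rw [← h1, integral_sub (integrable_const _)]
    · simp
    · simpa using (hexp u).re.congr (Eventually.of_forall (re_exp_I_mul_mul u))
  set M : Measure ℝ := volume.withDensity fun x => ENNReal.ofReal (N x) with hM
  have hNae : AEMeasurable (fun x => ENNReal.ofReal (N x)) :=
    hNm.aemeasurable.ennreal_ofReal
  have hMu : ∀ u : ℝ, ∫⁻ x : ℝ, ENNReal.ofReal ((1 - Real.cos (u * x)) / u ^ 2) ∂M =
      ENNReal.ofReal (-(F u).re / u ^ 2) := by
    intro u
    rw [hM, lintegral_withDensity_eq_lintegral_mul₀ hNae (by fun_prop), hre u,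
      ← integral_div, ofReal_integral_eq_lintegral_ofReal ((hci u).div_const _)]
    · refine lintegral_congr fun x => ?_
      rw [Pi.mul_apply, ← ENNReal.ofReal_mul (hN0 x)]
      congr 1
      ring
    · exact Eventually.of_forall fun x => div_nonneg
        (mul_nonneg (by linarith [Real.cos_le_one (u * x)]) (hN0 x)) (sq_nonneg u)
  have hPu : ∀ u : ℝ, ∫⁻ x : ℝ, ENNReal.ofReal ((1 - Real.cos (u * x)) / u ^ 2) ∂P ≤
      ENNReal.ofReal Δ * ∫⁻ x : ℝ, ENNReal.ofReal ((1 - Real.cos (u * x)) / u ^ 2) ∂M +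
        ENNReal.ofReal (((Δ * m) ^ 2 / 2 + 2) * (1 + u ^ 2)⁻¹) := by
    intro u
    have hz : (Δ * F u).re = Δ * (F u).re := Complex.re_ofReal_mul _ _
    have hz0 : (Δ * F u).re ≤ 0 := by
      rw [hz]; exact mul_nonpos_of_nonneg_of_nonpos hΔ.le (hre0 u)
    rw [hMu, ← ENNReal.ofReal_mul hΔ.le, ← ENNReal.ofReal_add,
      ← ofReal_integral_eq_lintegral_ofReal ((hcos u).div_const _), integral_div, hPre]
    · refine ENNReal.ofReal_le_ofReal ?_
      refine (div_le_div_of_nonneg_right (one_sub_re_exp_le hz0) (sq_nonneg u)).trans ?_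
      rw [add_div, hz, ← mul_neg, mul_div_assoc]
      exact add_le_add_right (one_sub_cos_div_sq_le (him u)) _
    · exact Eventually.of_forall fun x => div_nonneg
        (by linarith [Real.cos_le_one (u * x)]) (sq_nonneg u)
    · exact mul_nonneg hΔ.le (div_nonneg (by linarith [hre0 u]) (sq_nonneg u))
    · positivity
  have hMfin : ∫⁻ x : ℝ, ENNReal.ofReal |x| ∂M < ⊤ := by
    rw [hM, lintegral_withDensity_eq_lintegral_mul₀ hNae (by fun_prop)]
    refine lt_of_le_of_lt (lintegral_mono fun x => ?_) hxN.lintegral_lt_top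
    rw [Pi.mul_apply, ← ENNReal.ofReal_mul (hN0 x), mul_comm]
  have hfin : (∫⁻ x : ℝ, ENNReal.ofReal |x| ∂P) * oneSubCosConst < ⊤ := by
    rw [← lintegral_lintegral_one_sub_cos]
    refine (lintegral_mono hPu).trans_lt ?_
    rw [lintegral_add_right _ (by fun_prop), lintegral_const_mul' _ _ ENNReal.ofReal_ne_top,
      lintegral_lintegral_one_sub_cos]
    exact ENNReal.add_lt_top.2 ⟨ENNReal.mul_lt_top ENNReal.ofReal_lt_top
      (ENNReal.mul_lt_top hMfin oneSubCosConst_ne_top.lt_top),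
      lintegral_const_mul_inv_one_add_sq_lt_top _⟩
  refine ⟨by fun_prop, ?_⟩
  rw [hasFiniteIntegral_iff_norm]
  exact ENNReal.lt_top_of_mul_ne_top_left hfin.ne oneSubCosConst_ne_zero

/-- The first moment transform of an increment: `∫ x e^{iux} P(dx) = Δ g*(u) ψ(u)`. -/
lemma IncrementLawN.integral_exp_mul_id {N : ℝ → ℝ} (hNm : AEStronglyMeasurable N)
    (hxN : Integrable fun x : ℝ => x * N x) {Δ : ℝ} {P : Measure ℝ} [IsProbabilityMeasure P]
    (hP : IncrementLawN P Δ N) (hPi : Integrable (fun x : ℝ => x) P) (u : ℝ) :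
    ∫ x : ℝ, Complex.exp (Complex.I * u * x) * (x : ℂ) ∂P =
      Δ * ((∫ x : ℝ, Complex.exp (Complex.I * u * x) ∂P) * ft (fun x => x * N x) u) := by
  have h1 := (hasDerivAt_integral_exp_sub_one_mul hNm hxN u).const_mul (Δ : ℂ) |>.cexp
  have h2 := (hasDerivAt_integral_exp_sub_one_mul (μ := P) (n := fun _ => 1)
    aestronglyMeasurable_const (by simpa using hPi) u).add_const 1
  have h3 : (fun u : ℝ => (∫ x : ℝ, (Complex.exp (Complex.I * u * x) - 1) *
      ((1 : ℝ) : ℂ) ∂P) + 1) = fun u : ℝ => Complex.exp ((Δ : ℂ) *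
        ∫ x : ℝ, (Complex.exp (Complex.I * u * x) - 1) * (N x : ℂ)) := by
    funext u
    rw [← hP u]
    simp only [Complex.ofReal_one, mul_one]
    rw [integral_sub _ (integrable_const _)]
    · simp
    · exact (integrable_const (1 : ℝ)).mono' (continuous_exp_I_mul_mul u).aestronglyMeasurable
        (Eventually.of_forall fun x => (norm_exp_I_mul_mul u x).le)
  rw [h3] at h2
  have h4 := h2.unique h1
  rw [← hP u] at h4
  simp only [mul_one] at h4
  rw [ft]
  refine mul_left_cancel₀ Complex.I_ne_zero ?_
  linear_combination h4

/-- Fourier transform of `x ↦ ∫ g(x - y) P(dy)`. -/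
lemma integral_exp_mul_integral_sub {P : Measure ℝ} [IsProbabilityMeasure P] {g : ℝ → ℝ}
    (hg : Integrable g) (u : ℝ) :
    ∫ x : ℝ, Complex.exp (Complex.I * u * x) * ((∫ y : ℝ, g (x - y) ∂P : ℝ) : ℂ) =
      (∫ x : ℝ, Complex.exp (Complex.I * u * x) ∂P) * ft g u := by
  have hexp : Integrable (fun x : ℝ => Complex.exp (Complex.I * u * x)) P :=
    (integrable_const (1 : ℝ)).mono' (continuous_exp_I_mul_mul u).aestronglyMeasurable
      (Eventually.of_forall fun x => (norm_exp_I_mul_mul u x).le)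
  have := integral_convolution (ContinuousLinearMap.mul ℂ ℂ) hexp (integrable_exp_mul hg u)
  rw [ContinuousLinearMap.mul_apply'] at this
  rw [ft, ← this]
  refine integral_congr_ae (Eventually.of_forall fun x => ?_)
  simp only [MeasureTheory.convolution, ContinuousLinearMap.mul_apply']
  rw [← integral_complex_ofReal, ← integral_const_mul]
  refine integral_congr_ae (Eventually.of_forall fun y => ?_)
  simp only
  rw [← mul_assoc, ← Complex.exp_add]
  congr 2
  push_cast
  ring

lemma integrable_integral_sub {P : Measure ℝ} [IsProbabilityMeasure P] {g : ℝ → ℝ}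
    (hg : Integrable g) : Integrable fun x : ℝ => ∫ y : ℝ, g (x - y) ∂P := by
  have h := (Integrable.convolution_integrand (ContinuousLinearMap.mul ℝ ℝ)
    (integrable_const (1 : ℝ) (μ := P)) hg).integral_prod_left
  simpa using h

lemma aestronglyMeasurable_of_integrable_abs_mul {N : ℝ → ℝ}
    (h : Integrable fun x : ℝ => |x| * N x) : AEStronglyMeasurable N := by
  have h1 : AEStronglyMeasurable fun x : ℝ => |x|⁻¹ * (|x| * N x) :=
    (Measurable.aestronglyMeasurable (by fun_prop)).mul h.aestronglyMeasurable
  refine h1.congr ?_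
  filter_upwards [Measure.ae_ne volume (0 : ℝ)] with x hx
  exact inv_mul_cancel_left₀ (abs_ne_zero.2 hx) _

/-- Proposition 6.1: the measure `μ_Δ(dx) = Δ⁻¹ x P_Δ(dx)` has density
`h_Δ(x) = E[g(x - Z₁^Δ)]` with respect to Lebesgue measure. -/
theorem increment_density (N : ℝ → ℝ) (hN0 : ∀ x, 0 ≤ N x)
    (hNlevy : Integrable (fun x : ℝ => min 1 |x| * N x))
    (hxN : Integrable (fun x : ℝ => |x| * N x))
    (g : ℝ → ℝ) (hg : ∀ x, g x = x * N x)
    (Δ : ℝ) (hΔ : 0 < Δ)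
    (P : Measure ℝ) [IsProbabilityMeasure P] (hP : IncrementLawN P Δ N) :
    ∀ A : Set ℝ, MeasurableSet A →
      Δ⁻¹ * (∫ x in A, x ∂P) = ∫ x in A, (∫ y : ℝ, g (x - y) ∂P) := by
  intro A hA
  obtain rfl : g = fun x => x * N x := funext hg
  have hNm := aestronglyMeasurable_of_integrable_abs_mul hxN
  have hgi : Integrable fun x : ℝ => x * N x :=
    hxN.mono (measurable_id.aestronglyMeasurable.mul hNm) (Eventually.of_forall fun x => by simp)
  have hPi := hP.integrable_id hN0 hNm hxN hΔ
  have key := setIntegral_eq_of_fourier_eq hPi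
    ((integrable_integral_sub (P := P) hgi).const_mul Δ) (fun u => ?_) hA
  · rw [key, integral_const_mul, inv_mul_cancel_left₀ hΔ.ne']
  · rw [hP.integral_exp_mul_id hNm hgi hPi u, ← integral_exp_mul_integral_sub hgi,
      ← integral_const_mul]
    refine integral_congr_ae (Eventually.of_forall fun x => ?_)
    simp only
    rw [Complex.ofReal_mul]
    ring

end LevyAdapt
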